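/- There is a universal constant K > 0 such that for every m ∈ ℕ there exists an online factorization algorithm in the column arrival model for matrices with m rows with the following guarantee: for every N ∈ ℕ and every m×N real matrix A with columns a_1,…,a_N, when the algorithm is run on (a_1,…,a_N) it outputs matrices L_t and column vectors r_t satisfying ‖r_t‖_2 ≤ 1 for every t ∈ {1,…,N} and ‖L_N‖_{2→∞} ≤ K·γ2(A)·(log₂(2m))³. -/

import Mathlib

open Matrix

/-- `‖M‖_{2→∞}`: the maximum ℓ2 norm of a row of `M`. -/
noncomputable def rowNorm2inf {α β : Type*} [Fintype α] [Fintype β] (M : Matrix α β ℝ) : ℝ :=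
  ⨆ i, Real.sqrt (∑ j, (M i j) ^ 2)

/-- `‖M‖_{1→2}`: the maximum ℓ2 norm of a column of `M`. -/
noncomputable def colNorm12 {α β : Type*} [Fintype α] [Fintype β] (M : Matrix α β ℝ) : ℝ :=
  ⨆ j, Real.sqrt (∑ i, (M i j) ^ 2)

/-- The γ₂ factorization norm. -/
noncomputable def gamma2 {α β : Type*} [Fintype α] [Fintype β] (A : Matrix α β ℝ) : ℝ :=
  sInf { c : ℝ | ∃ (k : ℕ) (L : Matrix α (Fin k) ℝ) (R : Matrix (Fin k) β ℝ),
    L * R = A ∧ c = rowNorm2inf L * colNorm12 R }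

/-!
Suppose first that all vectors lie in an unknown ellipsoid `M · ball` whose matrix `M` has rows of
norm at most `1`. Keep weights `p ≥ 1` on the rows and, for each scale `2 ^ j` with `j < J`, a
subspace `V j` such that every `x ∈ V j` is a combination of the current columns with squared
coefficient norm at most `‖x‖_p² / 2 ^ j`, where `‖x‖_p² = ∑ i, p i * x i ^ 2`. If a new vector `a`
is at squared `p`-distance more than `2 ^ j` from `V j`, adjoin `a` to `V 0, …, V j`. The columns
that this requires are unit normals along a path of multiplicatively growing weights, so squared
row norms stay below the logarithm of the weights, at the price of increasing the total weight by
an amount proportional to `2 ^ j`.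

The payment comes from the total squared `p`-distance from the columns of `M` to `V j`. It is at
most `∑ i, p i`, and each such step lowers it by at least `2 ^ j` because `a` lies in the ellipsoid.
With a step size of order `1 / J` the total weight therefore at most doubles. A vector that is
close to every `V j` is split by telescoping into `J` pieces, one for each scale.

The assumption on `M` is removed by guessing `γ₂` and restarting whenever the guess is exceeded; the
guesses grow geometrically, so the last one dominates.
-/

namespace OnlineFactorization

variable {ι κ κ' : Type*}

section Ellipsoid

variable [Fintype κ] [Fintype κ']

/-- The squared Euclidean norm of the `i`-th row of `M`. -/
noncomputable def rowSq (M : Matrix ι κ ℝ) (i : ι) : ℝ := ∑ j, M i j ^ 2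

/-- `x` lies in the ellipsoid `M · {y | ‖y‖₂² ≤ θ}`: it is a combination of the columns of `M`
whose coefficient vector has squared length at most `θ`. -/
def MemEllipsoid (M : Matrix ι κ ℝ) (θ : ℝ) (x : ι → ℝ) : Prop :=
  ∃ y : κ → ℝ, ∑ j, y j ^ 2 ≤ θ ∧ M *ᵥ y = x

lemma rowSq_nonneg (M : Matrix ι κ ℝ) (i : ι) : 0 ≤ rowSq M i :=
  Finset.sum_nonneg fun _ _ => sq_nonneg _

lemma rowSq_fromCols (M : Matrix ι κ ℝ) (M' : Matrix ι κ' ℝ) (i : ι) :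
    rowSq (fromCols M M') i = rowSq M i + rowSq M' i := by
  simp [rowSq]

lemma rowSq_smul (c : ℝ) (M : Matrix ι κ ℝ) (i : ι) : rowSq (c • M) i = c ^ 2 * rowSq M i := by
  simp [rowSq, mul_pow, Finset.mul_sum]

lemma rowSq_submatrix_equiv (M : Matrix ι κ ℝ) (e : κ' ≃ κ) (i : ι) :
    rowSq (M.submatrix id e) i = rowSq M i :=
  e.sum_comp fun j => M i j ^ 2

namespace MemEllipsoid

variable {M : Matrix ι κ ℝ} {M' : Matrix ι κ' ℝ} {θ θ' : ℝ} {x x' : ι → ℝ}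

lemma zero (M : Matrix ι κ ℝ) : MemEllipsoid M 0 0 :=
  ⟨0, by simp, mulVec_zero M⟩

lemma mono (h : MemEllipsoid M θ x) (hθ : θ ≤ θ') : MemEllipsoid M θ' x :=
  let ⟨y, hy, hx⟩ := h
  ⟨y, hy.trans hθ, hx⟩

lemma smul (h : MemEllipsoid M θ x) (c : ℝ) : MemEllipsoid (c • M) θ (c • x) :=
  let ⟨y, hy, hx⟩ := h
  ⟨y, hy, by rw [smul_mulVec, hx]⟩

lemma rescale {c : ℝ} (hc : 0 < c) (h : MemEllipsoid M (c ^ 2) x) : MemEllipsoid (c • M) 1 x := by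
  obtain ⟨y, hy, rfl⟩ := h
  refine ⟨c⁻¹ • y, ?_, ?_⟩
  · simp only [Pi.smul_apply, smul_eq_mul, mul_pow, ← Finset.mul_sum]
    rwa [inv_pow, inv_mul_le_iff₀ (by positivity), mul_one]
  · rw [smul_mulVec, mulVec_smul, smul_inv_smul₀ hc.ne']

lemma fromCols (h : MemEllipsoid M θ x) (h' : MemEllipsoid M' θ' x') :
    MemEllipsoid (fromCols M M') (θ + θ') (x + x') := by
  obtain ⟨y, hy, rfl⟩ := h
  obtain ⟨y', hy', rfl⟩ := h'
  exact ⟨Sum.elim y y', by simpa using add_le_add hy hy', by rw [fromCols_mulVec]; rfl⟩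

lemma submatrix_equiv (h : MemEllipsoid M θ x) (e : κ' ≃ κ) :
    MemEllipsoid (M.submatrix id e) θ x := by
  obtain ⟨y, hy, rfl⟩ := h
  refine ⟨y ∘ e, (e.sum_comp fun j => y j ^ 2).trans_le hy, ?_⟩
  rw [submatrix_mulVec_equiv, Function.comp_assoc, Equiv.self_comp_symm]
  rfl

lemma sum {n : ℕ} {x : ℕ → ι → ℝ} (h : ∀ j < n, MemEllipsoid M θ (x j)) :
    MemEllipsoid M ((n : ℝ) ^ 2 * θ) (∑ j ∈ Finset.range n, x j) := by
  choose! y hy hx using h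
  refine ⟨∑ j ∈ Finset.range n, y j, ?_, ?_⟩
  · calc ∑ i, (∑ j ∈ Finset.range n, y j) i ^ 2
        ≤ ∑ i, (n : ℝ) * ∑ j ∈ Finset.range n, y j i ^ 2 := by
          gcongr with i
          simpa using sq_sum_le_card_mul_sum_sq (s := Finset.range n) (f := fun j => y j i)
      _ = n * ∑ j ∈ Finset.range n, ∑ i, y j i ^ 2 := by rw [← Finset.mul_sum, Finset.sum_comm]
      _ ≤ n * ∑ _j ∈ Finset.range n, θ := by
          gcongr with j hj
          exact hy j (Finset.mem_range.1 hj)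
      _ = (n : ℝ) ^ 2 * θ := by rw [Finset.sum_const, Finset.card_range, nsmul_eq_mul]; ring
  · rw [mulVec_sum]
    exact Finset.sum_congr rfl fun j hj => hx j (Finset.mem_range.1 hj)

lemma sq_apply_le (h : MemEllipsoid M θ x) (i : ι) : x i ^ 2 ≤ rowSq M i * θ := by
  obtain ⟨y, hy, rfl⟩ := h
  exact (Finset.sum_mul_sq_le_sq_mul_sq _ _ _).trans
    (mul_le_mul_of_nonneg_left hy (rowSq_nonneg M i))

end MemEllipsoid

/-- The matrix whose columns are the entries of `L`. -/
def colMatrix (L : List (ι → ℝ)) : Matrix ι (Fin L.length) ℝ := of fun i j => L[j] i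

lemma colMatrix_append (L L' : List (ι → ℝ)) :
    colMatrix (L ++ L') = (fromCols (colMatrix L) (colMatrix L')).submatrix id
      ((finCongr List.length_append).trans finSumFinEquiv.symm) := by
  ext i j
  obtain ⟨j, rfl⟩ := (finCongr (List.length_append (as := L) (bs := L'))).symm.surjective j
  induction j using Fin.addCases with
  | left j => simp [colMatrix]
  | right j =>
    have h : (L ++ L')[L.length + j]'(by simp) = L'[j] := by simp
    simpa [colMatrix] using congrFun h i

lemma colMatrix_map_smul (c : ℝ) (L : List (ι → ℝ)) :
    colMatrix (L.map (c • ·)) =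
      (c • colMatrix L).submatrix id (finCongr (List.length_map (c • ·))) := by
  ext i j
  simp [colMatrix]

lemma colMatrix_ofFn {n : ℕ} (w : Fin n → ι → ℝ) :
    colMatrix (List.ofFn w) = (of w)ᵀ.submatrix id (finCongr List.length_ofFn) := by
  ext i j
  simp only [colMatrix, of_apply, Fin.getElem_fin, List.getElem_ofFn]
  rfl

lemma rowSq_colMatrix_append (L L' : List (ι → ℝ)) (i : ι) :
    rowSq (colMatrix (L ++ L')) i = rowSq (colMatrix L) i + rowSq (colMatrix L') i := by
  rw [colMatrix_append, rowSq_submatrix_equiv, rowSq_fromCols]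

lemma rowSq_colMatrix_map_smul (c : ℝ) (L : List (ι → ℝ)) (i : ι) :
    rowSq (colMatrix (L.map (c • ·))) i = c ^ 2 * rowSq (colMatrix L) i := by
  rw [colMatrix_map_smul, rowSq_submatrix_equiv, rowSq_smul]

lemma MemEllipsoid.append {L L' : List (ι → ℝ)} {θ θ' : ℝ} {x x' : ι → ℝ}
    (h : MemEllipsoid (colMatrix L) θ x) (h' : MemEllipsoid (colMatrix L') θ' x') :
    MemEllipsoid (colMatrix (L ++ L')) (θ + θ') (x + x') := by
  rw [colMatrix_append]
  exact (h.fromCols h').submatrix_equiv _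

lemma MemEllipsoid.of_prefix {L L' : List (ι → ℝ)} {θ : ℝ} {x : ι → ℝ}
    (h : MemEllipsoid (colMatrix L) θ x) (hL : L <+: L') : MemEllipsoid (colMatrix L') θ x := by
  obtain ⟨W, rfl⟩ := hL
  simpa using h.append (zero (colMatrix W))

lemma MemEllipsoid.append_left {L : List (ι → ℝ)} {θ : ℝ} {x : ι → ℝ}
    (h : MemEllipsoid (colMatrix L) θ x) (W : List (ι → ℝ)) :
    MemEllipsoid (colMatrix (W ++ L)) θ x := by
  simpa using (zero (colMatrix W)).append h

lemma rowSq_colMatrix_ofFn_smul (c : ℝ) (u : ℕ → ι → ℝ) (n : ℕ) (i : ι) :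
    rowSq (colMatrix (List.ofFn fun k : Fin n => c • u k)) i =
      c ^ 2 * ∑ k ∈ Finset.range n, u k i ^ 2 := by
  rw [colMatrix_ofFn, rowSq_submatrix_equiv, ← Fin.sum_univ_eq_sum_range fun k => u k i ^ 2]
  simp [rowSq, mul_pow, Finset.mul_sum]

lemma memEllipsoid_ofFn_smul {c : ℝ} (hc : c ≠ 0) (u : ℕ → ι → ℝ) (y : ℕ → ℝ) (n : ℕ) :
    MemEllipsoid (colMatrix (List.ofFn fun k : Fin n => c • u k))
      ((c ^ 2)⁻¹ * ∑ k ∈ Finset.range n, y k ^ 2) (∑ k ∈ Finset.range n, y k • u k) := by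
  rw [colMatrix_ofFn]
  refine MemEllipsoid.submatrix_equiv ⟨fun k : Fin n => c⁻¹ * y k, le_of_eq ?_, ?_⟩ _
  · rw [← Fin.sum_univ_eq_sum_range fun k => y k ^ 2]
    simp [mul_pow, Finset.mul_sum]
  · rw [← Fin.sum_univ_eq_sum_range fun k => y k • u k]
    ext i
    simp only [mulVec, dotProduct, transpose_apply, of_apply, Pi.smul_apply, smul_eq_mul,
      Finset.sum_apply]
    exact Finset.sum_congr rfl fun k _ => by field_simp

end Ellipsoid

section WeightedSq

variable [Fintype ι]

/-- The squared norm `∑ i, p i * x i ^ 2` of `x` with respect to the diagonal form with entries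
`p`. -/
noncomputable def weightedSq (p x : ι → ℝ) : ℝ := ∑ i, p i * x i ^ 2

variable {p q : ι → ℝ}

lemma weightedSq_mono (h : p ≤ q) (x : ι → ℝ) : weightedSq p x ≤ weightedSq q x :=
  Finset.sum_le_sum fun i _ => mul_le_mul_of_nonneg_right (h i) (sq_nonneg _)

lemma weightedSq_nonneg (hp : 0 ≤ p) (x : ι → ℝ) : 0 ≤ weightedSq p x :=
  Finset.sum_nonneg fun i _ => mul_nonneg (hp i) (sq_nonneg _)

lemma mul_sq_le_weightedSq (hp : 0 ≤ p) (x : ι → ℝ) (i : ι) : p i * x i ^ 2 ≤ weightedSq p x :=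
  Finset.single_le_sum (f := fun i => p i * x i ^ 2)
    (fun i _ => mul_nonneg (hp i) (sq_nonneg _)) (Finset.mem_univ i)

lemma weightedSq_eq_zero (hp : ∀ i, 0 < p i) {x : ι → ℝ} : weightedSq p x = 0 ↔ x = 0 := by
  rw [weightedSq, Finset.sum_eq_zero_iff_of_nonneg fun i _ => mul_nonneg (hp i).le (sq_nonneg _)]
  simp [funext_iff, (hp _).ne']

lemma weightedSq_smul (p x : ι → ℝ) (c : ℝ) : weightedSq p (c • x) = c ^ 2 * weightedSq p x := by
  simp only [weightedSq, Finset.mul_sum, Pi.smul_apply, smul_eq_mul]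
  exact Finset.sum_congr rfl fun i _ => by ring

lemma weightedSq_eq_dotProduct (p x : ι → ℝ) : weightedSq p x = (p * x) ⬝ᵥ x :=
  Finset.sum_congr rfl fun i _ => by rw [Pi.mul_apply]; ring

lemma weightedSq_add (p x y : ι → ℝ) :
    weightedSq p (x + y) = weightedSq p x + 2 * ((p * x) ⬝ᵥ y) + weightedSq p y := by
  simp only [weightedSq, dotProduct, Finset.mul_sum, ← Finset.sum_add_distrib, Pi.add_apply,
    Pi.mul_apply]
  exact Finset.sum_congr rfl fun i _ => by ring

lemma weightedSq_sub_le (hp : 0 ≤ p) (x y : ι → ℝ) :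
    weightedSq p (x - y) ≤ 2 * (weightedSq p x + weightedSq p y) := by
  simp only [weightedSq, ← Finset.sum_add_distrib, Finset.mul_sum, Pi.sub_apply]
  refine Finset.sum_le_sum fun i _ => ?_
  nlinarith [mul_nonneg (hp i) (sq_nonneg (x i + y i))]

lemma weightedSq_sum_le (hp : 0 ≤ p) (n : ℕ) (x : ℕ → ι → ℝ) :
    weightedSq p (∑ k ∈ Finset.range n, x k) ≤ n * ∑ k ∈ Finset.range n, weightedSq p (x k) := by
  simp only [weightedSq, Finset.sum_apply]
  rw [Finset.sum_comm, Finset.mul_sum]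
  refine Finset.sum_le_sum fun i _ => ?_
  rw [← Finset.mul_sum, mul_left_comm]
  gcongr
  · exact hp i
  · simpa using sq_sum_le_card_mul_sum_sq (s := Finset.range n) (f := fun k => x k i)

lemma sum_weightedSq_transpose [Fintype κ] (p : ι → ℝ) (M : Matrix ι κ ℝ) :
    ∑ k, weightedSq p (Mᵀ k) = ∑ i, p i * rowSq M i := by
  simp only [weightedSq, rowSq, transpose_apply, Finset.mul_sum]
  exact Finset.sum_comm

lemma sum_weightedSq_sub_smul_le [Fintype κ] (hp : 0 ≤ p) (e : κ → ι → ℝ) {y : κ → ℝ}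
    (hy : ∑ k, y k ^ 2 ≤ 1) :
    ∑ k, weightedSq p (e k - y k • ∑ l, y l • e l) ≤
      ∑ k, weightedSq p (e k) - weightedSq p (∑ l, y l • e l) := by
  set b := ∑ l, y l • e l with hb
  have hexpand (k : κ) : weightedSq p (e k - y k • b) =
      weightedSq p (e k) - 2 * ((p * b) ⬝ᵥ (y k • e k)) + y k ^ 2 * weightedSq p b := by
    rw [sub_eq_add_neg, ← neg_smul, add_comm, weightedSq_add, weightedSq_smul, mul_smul_comm,
      smul_dotProduct, dotProduct_smul]
    simp only [smul_eq_mul]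
    ring
  have hcross : ∑ k, (p * b) ⬝ᵥ (y k • e k) = weightedSq p b := by
    rw [weightedSq_eq_dotProduct, ← dotProduct_sum, ← hb]
  simp only [hexpand, Finset.sum_add_distrib, Finset.sum_sub_distrib, ← Finset.mul_sum,
    ← Finset.sum_mul, hcross]
  nlinarith [weightedSq_nonneg hp b]

end WeightedSq

section UnitNormal

variable [Fintype ι] {p : ι → ℝ} {V V' : Submodule ℝ (ι → ℝ)} {u : ι → ℝ}

/-- `u` is a unit vector orthogonal to `V`, both with respect to the diagonal form with
entries `p`. -/
structure IsUnitNormal (p : ι → ℝ) (V : Submodule ℝ (ι → ℝ)) (u : ι → ℝ) : Prop where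
  weightedSq_eq_one : weightedSq p u = 1
  dotProduct_eq_zero : ∀ z ∈ V, (p * z) ⬝ᵥ u = 0

lemma exists_add_eq_of_orthogonal (hp : ∀ i, 0 < p i) (V : Submodule ℝ (ι → ℝ)) (a : ι → ℝ) :
    ∃ v ∈ V, ∃ w, (∀ z ∈ V, (p * z) ⬝ᵥ w = 0) ∧ v + w = a := by
  classical
  set B := Matrix.toBilin' (diagonal p)
  have hB (x y : ι → ℝ) : B x y = (p * x) ⬝ᵥ y := by
    rw [toBilin'_apply', dotProduct_mulVec]
    exact Finset.sum_congr rfl fun i _ => by rw [vecMul_diagonal, Pi.mul_apply, mul_comm (x i)]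
  have hsymm : B.IsSymm :=
    ⟨fun x y => by simp only [hB, dotProduct, Pi.mul_apply, mul_right_comm]⟩
  have hdisj : Disjoint V (B.orthogonal V) := by
    rw [Submodule.disjoint_def]
    intro x hx hx'
    rw [← weightedSq_eq_zero hp, weightedSq_eq_dotProduct, ← hB]
    exact hx' x hx
  have hcompl := (LinearMap.BilinForm.isCompl_orthogonal_iff_disjoint hsymm.isRefl).2 hdisj
  obtain ⟨v, hv, w, hw, rfl⟩ := Submodule.mem_sup.1 (hcompl.sup_eq_top ▸ Submodule.mem_top (x := a))
  exact ⟨v, hv, w, fun z hz => (hB z w).symm.trans (hw z hz), rfl⟩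

lemma exists_isUnitNormal (hp : ∀ i, 0 < p i) {a : ι → ℝ} (ha : a ∉ V) :
    ∃ u, IsUnitNormal p V u ∧ a ∈ V ⊔ Submodule.span ℝ {u} := by
  obtain ⟨v, hv, w, hw, rfl⟩ := exists_add_eq_of_orthogonal hp V a
  have hw₀ : w ≠ 0 := by
    rintro rfl
    exact ha (by simpa using hv)
  have hpos : 0 < weightedSq p w := (weightedSq_nonneg (fun i => (hp i).le) w).lt_of_ne'
    ((weightedSq_eq_zero hp).not.2 hw₀)
  set c := √(weightedSq p w)
  have hc : 0 < c := Real.sqrt_pos.2 hpos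
  refine ⟨c⁻¹ • w, ⟨?_, fun z hz => ?_⟩, Submodule.mem_sup.2 ⟨v, hv, w, ?_, rfl⟩⟩
  · rw [weightedSq_smul, inv_pow, Real.sq_sqrt hpos.le, inv_mul_cancel₀ hpos.ne']
  · rw [dotProduct_smul, hw z hz, smul_zero]
  · exact Submodule.mem_span_singleton.2 ⟨c, smul_inv_smul₀ hc.ne' w⟩

lemma IsUnitNormal.exists_eq_add_smul (hu : IsUnitNormal p V u) {x : ι → ℝ}
    (hx : x ∈ V ⊔ Submodule.span ℝ {u}) :
    ∃ y : ℝ, ∃ x' ∈ V, x = x' + y • u ∧ weightedSq p x = weightedSq p x' + y ^ 2 := by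
  obtain ⟨x', hx', _, hw, rfl⟩ := Submodule.mem_sup.1 hx
  obtain ⟨y, rfl⟩ := Submodule.mem_span_singleton.1 hw
  refine ⟨y, x', hx', rfl, ?_⟩
  rw [weightedSq_add, dotProduct_smul, hu.dotProduct_eq_zero x' hx', weightedSq_smul,
    hu.weightedSq_eq_one, smul_zero, mul_zero, add_zero, mul_one]

lemma IsUnitNormal.sq_apply_le_one (hu : IsUnitNormal p V u) (hp : 1 ≤ p) (i : ι) :
    u i ^ 2 ≤ 1 :=
  calc u i ^ 2 ≤ p i * u i ^ 2 := le_mul_of_one_le_left (sq_nonneg _) (hp i)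
    _ ≤ weightedSq p u := mul_sq_le_weightedSq (zero_le_one.trans hp) u i
    _ = 1 := hu.weightedSq_eq_one

end UnitNormal

section WeightPath

lemma le_logb_two_one_add {x : ℝ} (h₀ : 0 ≤ x) (h₁ : x ≤ 1) : x ≤ Real.logb 2 (1 + x) := by
  rw [Real.le_logb_iff_rpow_le one_lt_two (by positivity)]
  have h := rpow_one_add_le_one_add_mul_self (s := 1) (by norm_num) h₀ h₁
  rwa [mul_one, one_add_one_eq_two] at h

lemma le_mul_one_add_smul_sq {δ : ℝ} {q : ι → ℝ} (hq : 0 ≤ q) (hδ : 0 ≤ δ) (u : ι → ℝ) :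
    q ≤ q * (1 + δ • u ^ 2) :=
  fun i => le_mul_of_one_le_right (hq i)
    (le_add_of_nonneg_right (mul_nonneg hδ (sq_nonneg (u i))))

variable [Fintype ι] {δ : ℝ} {V V' : Submodule ℝ (ι → ℝ)} {Q u : ℕ → ι → ℝ}

/-- A discretized multiplicative-weights flow which adds to `V` the missing direction of `V'`:
`u k` is the unit normal of `V` with respect to the weights `Q k`, and the weights grow in
proportion to its squared coordinates, with step size `δ`. -/
structure IsWeightPath (δ : ℝ) (V V' : Submodule ℝ (ι → ℝ)) (Q u : ℕ → ι → ℝ) : Prop where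
  one_le k : 1 ≤ Q k
  isUnitNormal k : IsUnitNormal (Q k) V (u k)
  le_sup_span k : V' ≤ V ⊔ Submodule.span ℝ {u k}
  succ k : Q (k + 1) = Q k * (1 + δ • u k ^ 2)

lemma exists_isWeightPath (hδ : 0 ≤ δ) {p : ι → ℝ} (hp : 1 ≤ p) {a : ι → ℝ} (ha : a ∉ V) :
    ∃ Q u, Q 0 = p ∧ IsWeightPath δ V (V ⊔ Submodule.span ℝ {a}) Q u := by
  have hnormal (q : ι → ℝ) (hq : 1 ≤ q) := exists_isUnitNormal (fun i => one_pos.trans_le (hq i)) ha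
  choose! U hU haU using hnormal
  let next (q : ι → ℝ) : ι → ℝ := q * (1 + δ • U q ^ 2)
  have hsucc (k : ℕ) : next^[k + 1] p = next (next^[k] p) := Function.iterate_succ_apply' next k p
  have hone (k : ℕ) : 1 ≤ next^[k] p := by
    induction k with
    | zero => exact hp
    | succ k ih =>
      rw [hsucc]
      exact ih.trans (le_mul_one_add_smul_sq (zero_le_one.trans ih) hδ _)
  refine ⟨fun k => next^[k] p, fun k => U (next^[k] p), rfl, hone, fun k => hU _ (hone k),
    fun k => sup_le le_sup_left ?_, hsucc⟩
  rw [Submodule.span_singleton_le_iff_mem]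
  exact haU _ (hone k)

namespace IsWeightPath

lemma monotone (h : IsWeightPath δ V V' Q u) (hδ : 0 ≤ δ) : Monotone Q :=
  monotone_nat_of_le_succ fun k => by
    rw [h.succ]
    exact le_mul_one_add_smul_sq (zero_le_one.trans (h.one_le k)) hδ _

lemma sum_eq (h : IsWeightPath δ V V' Q u) (n : ℕ) : ∑ i, Q n i = ∑ i, Q 0 i + n * δ := by
  induction n with
  | zero => simp
  | succ n ih =>
    calc ∑ i, Q (n + 1) i = ∑ i, Q n i + δ * weightedSq (Q n) (u n) := by
          simp only [h.succ, weightedSq, Finset.mul_sum, ← Finset.sum_add_distrib, Pi.mul_apply,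
            Pi.add_apply, Pi.one_apply, Pi.smul_apply, Pi.pow_apply, smul_eq_mul]
          exact Finset.sum_congr rfl fun i _ => by ring
      _ = ∑ i, Q 0 i + (n + 1 : ℕ) * δ := by
          rw [(h.isUnitNormal n).weightedSq_eq_one, ih]; push_cast; ring

lemma sum_sq_le_logb (h : IsWeightPath δ V V' Q u) (hδ₀ : 0 ≤ δ) (hδ₁ : δ ≤ 1) (n : ℕ) (i : ι) :
    ∑ k ∈ Finset.range n, δ * u k i ^ 2 ≤ Real.logb 2 (Q n i) - Real.logb 2 (Q 0 i) := by
  have hstep (k : ℕ) : δ * u k i ^ 2 ≤ Real.logb 2 (Q (k + 1) i) - Real.logb 2 (Q k i) := by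
    have hnonneg : 0 ≤ δ * u k i ^ 2 := mul_nonneg hδ₀ (sq_nonneg _)
    have hpos : 0 < Q k i := one_pos.trans_le (h.one_le k i)
    have hsucc : Q (k + 1) i = Q k i * (1 + δ * u k i ^ 2) := congrFun (h.succ k) i
    rw [hsucc, Real.logb_mul hpos.ne' (by positivity), add_sub_cancel_left]
    exact le_logb_two_one_add hnonneg
      (mul_le_one₀ hδ₁ (sq_nonneg _) ((h.isUnitNormal k).sq_apply_le_one (h.one_le k) i))
  exact (Finset.sum_le_sum fun k _ => hstep k).trans_eq
    (Finset.sum_range_sub (fun k => Real.logb 2 (Q k i)) n)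

/-- Averaging the decompositions of `x` along the path makes the final weights pay for all
coefficients. -/
lemma exists_eq_add_average (h : IsWeightPath δ V V' Q u) (hδ : 0 ≤ δ) {n : ℕ} (hn : 0 < n)
    {x : ι → ℝ} (hx : x ∈ V') :
    ∃ x' ∈ V, ∃ y : ℕ → ℝ, x = x' + (n : ℝ)⁻¹ • ∑ k ∈ Finset.range n, y k • u k ∧
      (n : ℝ)⁻¹ * ∑ k ∈ Finset.range n, y k ^ 2 + weightedSq (Q 0) x' ≤ weightedSq (Q n) x := by
  have hn₀ : (0 : ℝ) < n := Nat.cast_pos.2 hn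
  choose y x' hx' hxy hnorm using fun k =>
    (h.isUnitNormal k).exists_eq_add_smul (h.le_sup_span k hx)
  refine ⟨(n : ℝ)⁻¹ • ∑ k ∈ Finset.range n, x' k,
    V.smul_mem _ (V.sum_mem fun k _ => hx' k), y, ?_, ?_⟩
  · rw [← smul_add, ← Finset.sum_add_distrib, Finset.sum_congr rfl fun k _ => (hxy k).symm,
      Finset.sum_const, Finset.card_range, ← Nat.cast_smul_eq_nsmul ℝ, inv_smul_smul₀ hn₀.ne']
  · have haverage : weightedSq (Q 0) ((n : ℝ)⁻¹ • ∑ k ∈ Finset.range n, x' k) ≤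
        (n : ℝ)⁻¹ * ∑ k ∈ Finset.range n, weightedSq (Q 0) (x' k) := by
      rw [weightedSq_smul, sq, mul_assoc]
      gcongr
      rw [inv_mul_le_iff₀ hn₀]
      exact weightedSq_sum_le (zero_le_one.trans (h.one_le 0)) n x'
    have hterm (k : ℕ) (hk : k ∈ Finset.range n) :
        y k ^ 2 + weightedSq (Q 0) (x' k) ≤ weightedSq (Q n) x :=
      calc y k ^ 2 + weightedSq (Q 0) (x' k) ≤ y k ^ 2 + weightedSq (Q k) (x' k) := by
            gcongr
            exact weightedSq_mono (h.monotone hδ k.zero_le) _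
        _ = weightedSq (Q k) x := by rw [hnorm k, add_comm]
        _ ≤ weightedSq (Q n) x :=
            weightedSq_mono (h.monotone hδ (Finset.mem_range.1 hk).le) x
    calc _ ≤ (n : ℝ)⁻¹ * ∑ k ∈ Finset.range n, (y k ^ 2 + weightedSq (Q 0) (x' k)) := by
          rw [Finset.sum_add_distrib, mul_add]
          gcongr
      _ ≤ weightedSq (Q n) x := by
          rw [inv_mul_le_iff₀ hn₀]
          simpa using Finset.sum_le_card_nsmul _ _ _ hterm

end IsWeightPath

end WeightPath

section Covers

variable {η s : ℝ} {L L' L'' : List (ι → ℝ)} {p p' p'' : ι → ℝ}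
  {V : Submodule ℝ (ι → ℝ)}

/-- The list of columns `L` with weights `p` may be continued to `L'` with weights `p'`: columns
are only appended, and the growth of the row norms is charged to the logarithms of the weights. -/
structure Extends (η : ℝ) (L L' : List (ι → ℝ)) (p p' : ι → ℝ) : Prop where
  isPrefix : L <+: L'
  weight_le : p ≤ p'
  rowSq_le i : η * (rowSq (colMatrix L') i - rowSq (colMatrix L) i) ≤
    Real.logb 2 (p' i) - Real.logb 2 (p i)

lemma Extends.refl (η : ℝ) (L : List (ι → ℝ)) (p : ι → ℝ) : Extends η L L p p :=
  ⟨List.prefix_rfl, le_rfl, fun i => by simp⟩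

lemma Extends.trans (h : Extends η L L' p p') (h' : Extends η L' L'' p' p'') :
    Extends η L L'' p p'' :=
  ⟨h.isPrefix.trans h'.isPrefix, h.weight_le.trans h'.weight_le, fun i => by
    linarith [h.rowSq_le i, h'.rowSq_le i]⟩

variable [Fintype ι]

/-- Every `x ∈ U` is a combination of the columns `L` with squared coefficient norm at most
`weightedSq p x / s`. -/
def Covers (L : List (ι → ℝ)) (p : ι → ℝ) (s : ℝ) (U : Submodule ℝ (ι → ℝ)) : Prop :=
  ∀ x ∈ U, MemEllipsoid (colMatrix L) (weightedSq p x / s) x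

lemma Covers.mono {U : Submodule ℝ (ι → ℝ)} (h : Covers L p s U) (hs : 0 ≤ s)
    (hL : Extends η L L' p p') : Covers L' p' s U := fun x hx =>
  ((h x hx).of_prefix hL.isPrefix).mono
    (div_le_div_of_nonneg_right (weightedSq_mono hL.weight_le x) hs)

theorem exists_extends_covers_sup_span (hη : 0 < η) (hs : 0 < s) (hp : 1 ≤ p)
    (hcov : Covers L p s V) (a : ι → ℝ) :
    ∃ L' p', Extends η L L' p p' ∧ ∑ i, p' i ≤ ∑ i, p i + η * s ∧
      Covers L' p' s (V ⊔ Submodule.span ℝ {a}) := by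
  by_cases ha : a ∈ V
  · rw [sup_eq_left.2 ((Submodule.span_singleton_le_iff_mem a V).2 ha)]
    exact ⟨L, p, Extends.refl η L p, le_add_of_nonneg_right (by positivity), hcov⟩
  obtain ⟨n, hn⟩ := exists_nat_gt (η * s)
  have hn₀ : (0 : ℝ) < n := (mul_pos hη hs).trans hn
  have hδ₀ : 0 ≤ η * (s / n) := by positivity
  have hδ₁ : η * (s / n) ≤ 1 := by rw [← mul_div_assoc, div_le_one hn₀]; exact hn.le
  obtain ⟨Q, u, rfl, hQ⟩ := exists_isWeightPath hδ₀ hp ha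
  have hsn : 0 < s / n := by positivity
  refine ⟨L ++ List.ofFn fun k : Fin n => √(s / n) • u k, Q n,
    ⟨List.prefix_append _ _, hQ.monotone hδ₀ n.zero_le, fun i => ?_⟩, ?_, fun x hx => ?_⟩
  · rw [rowSq_colMatrix_append, add_sub_cancel_left, rowSq_colMatrix_ofFn_smul,
      Real.sq_sqrt hsn.le, ← mul_assoc, Finset.mul_sum]
    exact hQ.sum_sq_le_logb hδ₀ hδ₁ n i
  · rw [hQ.sum_eq]
    exact le_of_eq (by field_simp)
  · obtain ⟨x', hx', y, hxy, hle⟩ := hQ.exists_eq_add_average hδ₀ (Nat.cast_pos.1 hn₀) hx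
    have hnew := memEllipsoid_ofFn_smul (Real.sqrt_ne_zero'.2 hsn) u (fun k => (n : ℝ)⁻¹ * y k) n
    simp only [mul_smul, ← Finset.smul_sum, Real.sq_sqrt hsn.le, mul_pow, ← Finset.mul_sum] at hnew
    rw [hxy]
    refine ((hcov x' hx').append hnew).mono ?_
    rw [← hxy, le_div_iff₀ hs, add_mul, div_mul_cancel₀ _ hs.ne', add_comm]
    refine hle.trans' (le_of_eq ?_)
    field_simp

theorem exists_extends_covers_finset {τ : Type*} [DecidableEq τ] {scale : τ → ℝ}
    {V : τ → Submodule ℝ (ι → ℝ)} (hη : 0 < η) (hscale : ∀ j, 0 < scale j) (hp : 1 ≤ p)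
    (hcov : ∀ j, Covers L p (scale j) (V j)) (a : ι → ℝ) (t : Finset τ) :
    ∃ L' p', Extends η L L' p p' ∧ ∑ i, p' i ≤ ∑ i, p i + η * ∑ j ∈ t, scale j ∧
      ∀ j, Covers L' p' (scale j) (if j ∈ t then V j ⊔ Submodule.span ℝ {a} else V j) := by
  induction t using Finset.induction_on with
  | empty => exact ⟨L, p, Extends.refl η L p, by simp, by simpa using hcov⟩
  | insert j t hj ih =>
    obtain ⟨L₁, p₁, hL₁, hp₁, hcov₁⟩ := ih
    have hcovj : Covers L₁ p₁ (scale j) (V j) := by simpa [hj] using hcov₁ j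
    obtain ⟨L₂, p₂, hL₂, hp₂, hcov₂⟩ := exists_extends_covers_sup_span hη (hscale j)
      (hp.trans hL₁.weight_le) hcovj a
    refine ⟨L₂, p₂, hL₁.trans hL₂, ?_, fun i => ?_⟩
    · rw [Finset.sum_insert hj]
      linarith
    · obtain rfl | hij := eq_or_ne i j
      · simpa using hcov₂
      · simpa [hij] using (hcov₁ i).mono (hscale i).le hL₂

end Covers

section Approx

variable [Fintype ι] [Fintype κ] {q : ι → ℝ} {V V' : Submodule ℝ (ι → ℝ)} {M : Matrix ι κ ℝ}
  {B s : ℝ} {a : ι → ℝ}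

/-- The columns of `M` can be approximated by vectors of `V` with total squared error at most `B`
in the norm with weights `q`. This is the potential of the algorithm. -/
def ApproxWithin (q : ι → ℝ) (V : Submodule ℝ (ι → ℝ)) (M : Matrix ι κ ℝ) (B : ℝ) : Prop :=
  ∃ c : κ → ι → ℝ, (∀ k, c k ∈ V) ∧ ∑ k, weightedSq q (Mᵀ k - c k) ≤ B

lemma ApproxWithin.mono (h : ApproxWithin q V M B) (hV : V ≤ V') : ApproxWithin q V' M B :=
  let ⟨c, hc, hB⟩ := h
  ⟨c, fun k => hV (hc k), hB⟩

lemma ApproxWithin.nonneg (h : ApproxWithin q V M B) (hq : 0 ≤ q) : 0 ≤ B :=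
  let ⟨_, _, hB⟩ := h
  (Finset.sum_nonneg fun _ _ => weightedSq_nonneg hq _).trans hB

lemma ApproxWithin.sub_of_far (h : ApproxWithin q V M B) (hq : 0 ≤ q) (hV : V ≤ V') (ha : a ∈ V')
    (hM : MemEllipsoid M 1 a) (hfar : ∀ v ∈ V, s ≤ weightedSq q (a - v)) :
    ApproxWithin q V' M (B - s) := by
  obtain ⟨c, hc, hB⟩ := h
  obtain ⟨y, hy, rfl⟩ := hM
  set b := ∑ k, y k • (Mᵀ k - c k) with hb
  have hb_eq : b = M *ᵥ y - ∑ k, y k • c k := by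
    rw [mulVec_eq_sum, hb]
    simp [smul_sub, Finset.sum_sub_distrib]
  have hcV : ∑ k, y k • c k ∈ V := V.sum_mem fun k _ => V.smul_mem _ (hc k)
  have hbV : b ∈ V' := hb_eq ▸ V'.sub_mem ha (hV hcV)
  refine ⟨fun k => c k + y k • b, fun k => V'.add_mem (hV (hc k)) (V'.smul_mem _ hbV), ?_⟩
  have hdrop := sum_weightedSq_sub_smul_le hq (fun k => Mᵀ k - c k) hy
  have hs : s ≤ weightedSq q b := hb_eq ▸ hfar _ hcV
  simp only [← sub_sub, ← hb] at hdrop ⊢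
  linarith

end Approx

/-- The family `V` with `a` adjoined to the subspaces of index at most `j`; it stays a decreasing
chain if `V` is one. -/
def adjoin (V : ℕ → Submodule ℝ (ι → ℝ)) (a : ι → ℝ) (j i : ℕ) : Submodule ℝ (ι → ℝ) :=
  if i ∈ Finset.range (j + 1) then V i ⊔ Submodule.span ℝ {a} else V i

lemma le_adjoin (V : ℕ → Submodule ℝ (ι → ℝ)) (a : ι → ℝ) (j i : ℕ) : V i ≤ adjoin V a j i := by
  unfold adjoin
  split_ifs
  exacts [le_sup_left, le_rfl]

lemma mem_adjoin (V : ℕ → Submodule ℝ (ι → ℝ)) (a : ι → ℝ) {i j : ℕ} (hi : i < j + 1) :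
    a ∈ adjoin V a j i := by
  rw [adjoin, if_pos (Finset.mem_range.2 hi)]
  exact Submodule.mem_sup_right (Submodule.mem_span_singleton_self a)

lemma antitone_adjoin {V : ℕ → Submodule ℝ (ι → ℝ)} (hV : Antitone V) (a : ι → ℝ) (j : ℕ) :
    Antitone (adjoin V a j) := by
  intro i k hik
  by_cases hk : k < j + 1
  · rw [adjoin, adjoin, if_pos (Finset.mem_range.2 hk),
      if_pos (Finset.mem_range.2 (hik.trans_lt hk))]
    exact sup_le_sup_right (hV hik) _
  · rw [adjoin, if_neg (Finset.mem_range.not.2 hk)]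
    exact (hV hik).trans (le_adjoin V a j i)

section State

variable [Fintype ι] {η : ℝ} {J : ℕ} {l : List (ι → ℝ)} {a : ι → ℝ}

/-- `a` is within squared distance `s` of `V` in the norm with weights `p`. -/
def Near (p : ι → ℝ) (V : Submodule ℝ (ι → ℝ)) (s : ℝ) (a : ι → ℝ) : Prop :=
  ∃ v ∈ V, weightedSq p (a - v) ≤ s

lemma near_of_mem {p : ι → ℝ} {V : Submodule ℝ (ι → ℝ)} {s : ℝ} (hs : 0 ≤ s) (ha : a ∈ V) :
    Near p V s a :=
  ⟨a, ha, by simpa [weightedSq] using hs⟩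

/-- The state of the algorithm after the vectors `l` have arrived. The subspace `V j` is handled
at scale `2 ^ j`; `spent j` is the total decrease of the potential at that scale. Neither the
ellipsoid `M` nor the weights `q` in `approx` are known to the algorithm: the bound holds for every
ellipsoid that contains `l`. -/
structure State (ι : Type*) [Fintype ι] (η : ℝ) (J : ℕ) (l : List (ι → ℝ)) where
  cols : List (ι → ℝ)
  weight : ι → ℝ
  V : ℕ → Submodule ℝ (ι → ℝ)
  spent : ℕ → ℝ
  one_le : 1 ≤ weight
  V_zero : V 0 = ⊤
  antitone : Antitone V
  rowSq_le i : η * rowSq (colMatrix cols) i ≤ η + Real.logb 2 (weight i)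
  covers j : Covers cols weight (2 ^ j) (V j)
  sum_weight_le : ∑ i, weight i ≤ Fintype.card ι + 2 * η * ∑ j ∈ Finset.range J, spent j
  approx j {n : ℕ} (M : Matrix ι (Fin n) ℝ) (q : ι → ℝ) : weight ≤ q →
    (∀ a ∈ l, MemEllipsoid M 1 a) → ApproxWithin q (V j) M (∑ k, weightedSq q (Mᵀ k) - spent j)

lemma exists_basis_list (ι : Type*) [Fintype ι] : ∃ L : List (ι → ℝ),
    (∀ i, rowSq (colMatrix L) i = 1) ∧ ∀ x, MemEllipsoid (colMatrix L) (∑ i, x i ^ 2) x := by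
  classical
  let e := (Fintype.equivFin ι).symm
  have hone : (of fun k => Pi.single (e k) (1 : ℝ))ᵀ = (1 : Matrix ι ι ℝ).submatrix id e := by
    ext i k
    simp [one_apply, Pi.single_apply]
  refine ⟨List.ofFn fun k => Pi.single (e k) 1, fun i => ?_, fun x => ?_⟩
  · rw [colMatrix_ofFn, rowSq_submatrix_equiv, hone, rowSq_submatrix_equiv]
    simp [rowSq, one_apply]
  · rw [colMatrix_ofFn, hone]
    exact MemEllipsoid.submatrix_equiv (MemEllipsoid.submatrix_equiv ⟨x, le_rfl, one_mulVec x⟩ _) _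

lemma State.nonempty_nil (ι : Type*) [Fintype ι] (η : ℝ) (J : ℕ) : Nonempty (State ι η J []) := by
  obtain ⟨L, hrow, hmem⟩ := exists_basis_list ι
  exact ⟨{
    cols := L
    weight := 1
    V j := if j = 0 then ⊤ else ⊥
    spent := 0
    one_le := le_rfl
    V_zero := rfl
    antitone i j hij := by
      dsimp only
      split_ifs <;> simp_all
    rowSq_le i := by simp [hrow]
    covers j x hx := by
      obtain rfl | hj := eq_or_ne j 0
      · simpa [weightedSq] using hmem x
      · obtain rfl : x = 0 := by simpa [hj] using hx
        simpa [weightedSq] using MemEllipsoid.zero (colMatrix L)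
    sum_weight_le := by simp
    approx j n M q _ _ := ⟨0, fun _ => zero_mem _, by simp⟩ }⟩

/-- The same state, seen after further arrivals that it ignores. -/
def State.weaken {l' : List (ι → ℝ)} (S : State ι η J l) (h : l ⊆ l') : State ι η J l' :=
  { S with approx := fun j _ M q hq hM => S.approx j M q hq fun a ha => hM a (h ha) }

lemma State.exists_mem_of_far (hη : 0 < η) (S : State ι η J l) (ha : a ∈ l) {j : ℕ} (hj : j < J)
    (hfar : ¬ Near S.weight (S.V j) (2 ^ j) a) :
    ∃ S' : State ι η J l, S.cols <+: S'.cols ∧ ∀ i < j + 1, a ∈ S'.V i := by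
  obtain ⟨L', p', hL', hp', hcov'⟩ := exists_extends_covers_finset hη (fun j => pow_pos two_pos j)
    S.one_le S.covers a (Finset.range (j + 1))
  refine ⟨{
    cols := L'
    weight := p'
    V := adjoin S.V a j
    spent := fun i => S.spent i + Pi.single (M := fun _ => ℝ) j (2 ^ j) i
    one_le := S.one_le.trans hL'.weight_le
    V_zero := top_le_iff.1 (S.V_zero.symm.trans_le (le_adjoin S.V a j 0))
    antitone := antitone_adjoin S.antitone a j
    rowSq_le := fun i => by linarith [S.rowSq_le i, hL'.rowSq_le i]
    covers := hcov'
    sum_weight_le := ?_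
    approx := fun i n M q hq hM => ?_ }, hL'.isPrefix, fun i hi => mem_adjoin S.V a hi⟩
  · have hgeom : ∑ i ∈ Finset.range (j + 1), (2 : ℝ) ^ i ≤ 2 * 2 ^ j := by
      rw [geom_sum_eq (by norm_num), pow_succ]
      linarith
    rw [Finset.sum_add_distrib, Finset.sum_pi_single', if_pos (Finset.mem_range.2 hj)]
    nlinarith [S.sum_weight_le]
  · have hp'q : S.weight ≤ q := hL'.weight_le.trans hq
    have happrox := S.approx i M q hp'q hM
    obtain rfl | hij := eq_or_ne i j
    · have hfar_q : ∀ v ∈ S.V i, (2 : ℝ) ^ i ≤ weightedSq q (a - v) := fun v hv =>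
        (not_le.1 fun hle => hfar ⟨v, hv, hle⟩).le.trans (weightedSq_mono hp'q _)
      simpa [sub_sub] using happrox.sub_of_far (zero_le_one.trans (S.one_le.trans hp'q))
        (le_adjoin S.V a i i) (mem_adjoin S.V a i.lt_succ_self) (hM a ha) hfar_q
    · simpa [hij] using happrox.mono (le_adjoin S.V a j i)

lemma State.exists_near_succ (hη : 0 < η) (S : State ι η J l) (ha : a ∈ l) {j : ℕ} (hj : j < J)
    (hnear : ∀ i < j, Near S.weight (S.V i) (2 ^ i) a) :
    ∃ S' : State ι η J l, S.cols <+: S'.cols ∧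
      ∀ i < j + 1, Near S'.weight (S'.V i) (2 ^ i) a := by
  by_cases hja : Near S.weight (S.V j) (2 ^ j) a
  · exact ⟨S, List.prefix_rfl, Nat.forall_lt_succ_right.2 ⟨hnear, hja⟩⟩
  · obtain ⟨S', hS', hmem⟩ := S.exists_mem_of_far hη ha hj hja
    exact ⟨S', hS', fun i hi => near_of_mem (by positivity) (hmem i hi)⟩

lemma State.exists_append (hη : 0 < η) (S : State ι η J l) (a : ι → ℝ) :
    ∃ S' : State ι η J (l ++ [a]), S.cols <+: S'.cols ∧
      ∀ j < J, Near S'.weight (S'.V j) (2 ^ j) a := by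
  suffices h : ∀ k ≤ J, ∃ S' : State ι η J (l ++ [a]), S.cols <+: S'.cols ∧
      ∀ j < k, Near S'.weight (S'.V j) (2 ^ j) a from h J le_rfl
  intro k hk
  induction k with
  | zero => exact ⟨S.weaken (List.subset_append_left l [a]), List.prefix_rfl, by simp⟩
  | succ k ih =>
    obtain ⟨S₁, hS₁, hnear⟩ := ih (Nat.le_of_succ_le hk)
    obtain ⟨S₂, hS₂, hnear₂⟩ := S₁.exists_near_succ hη (by simp) hk hnear
    exact ⟨S₂, hS₁.trans hS₂, hnear₂⟩

end State

section Feasible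

variable {l l' : List (ι → ℝ)}

/-- The vectors `l` lie in a common ellipsoid whose matrix has rows of norm at most `1`; this
says that the matrix with columns `l` has a factorization which witnesses `γ₂ ≤ 1`. -/
def Feasible (l : List (ι → ℝ)) : Prop :=
  ∃ (n : ℕ) (M : Matrix ι (Fin n) ℝ), (∀ i, rowSq M i ≤ 1) ∧ ∀ a ∈ l, MemEllipsoid M 1 a

lemma Feasible.mono (h : Feasible l') (hl : l ⊆ l') : Feasible l :=
  let ⟨n, M, hrow, hM⟩ := h
  ⟨n, M, hrow, fun a ha => hM a (hl ha)⟩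

lemma Feasible.sq_apply_le_one (h : Feasible l) {a : ι → ℝ} (ha : a ∈ l) (i : ι) : a i ^ 2 ≤ 1 := by
  obtain ⟨n, M, hrow, hM⟩ := h
  exact ((hM a ha).sq_apply_le i).trans (by rw [mul_one]; exact hrow i)

namespace State

variable [Fintype ι] {η : ℝ} {J : ℕ}

lemma spent_le_sum_weight (S : State ι η J l) (h : Feasible l) (j : ℕ) :
    S.spent j ≤ ∑ i, S.weight i := by
  obtain ⟨n, M, hrow, hM⟩ := h
  have hweight : 0 ≤ S.weight := zero_le_one.trans S.one_le
  calc S.spent j ≤ ∑ k, weightedSq S.weight (Mᵀ k) :=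
        sub_nonneg.1 ((S.approx j M S.weight le_rfl hM).nonneg hweight)
    _ = ∑ i, S.weight i * rowSq M i := sum_weightedSq_transpose _ _
    _ ≤ ∑ i, S.weight i := Finset.sum_le_sum fun i _ =>
        mul_le_of_le_one_right (hweight i) (hrow i)

lemma sum_weight_le_two_mul_card (S : State ι η J l) (h : Feasible l) (hη : 0 ≤ η)
    (hηJ : 4 * η * J ≤ 1) : ∑ i, S.weight i ≤ 2 * Fintype.card ι := by
  have hspent : ∑ j ∈ Finset.range J, S.spent j ≤ J * ∑ i, S.weight i := by
    simpa using Finset.sum_le_card_nsmul (Finset.range J) _ _ fun j _ => S.spent_le_sum_weight h j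
  have hweight : 0 ≤ ∑ i, S.weight i :=
    Finset.sum_nonneg fun i _ => zero_le_one.trans (S.one_le i)
  have hcost : 2 * η * ∑ j ∈ Finset.range J, S.spent j ≤ (∑ i, S.weight i) / 2 :=
    calc 2 * η * ∑ j ∈ Finset.range J, S.spent j ≤ 2 * η * (J * ∑ i, S.weight i) := by gcongr
      _ = 4 * η * J * (∑ i, S.weight i) / 2 := by ring
      _ ≤ (∑ i, S.weight i) / 2 := by gcongr; exact mul_le_of_le_one_left hweight hηJ
  linarith [S.sum_weight_le]

lemma mul_rowSq_le_of_sum_weight_le (S : State ι η J l) (h : ∑ i, S.weight i ≤ 2 ^ J) (i : ι) :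
    η * rowSq (colMatrix S.cols) i ≤ η + J := by
  have hweight : S.weight i ≤ 2 ^ J :=
    (Finset.single_le_sum (fun i _ => zero_le_one.trans (S.one_le i)) (Finset.mem_univ i)).trans h
  have hlog : Real.logb 2 (S.weight i) ≤ J :=
    calc Real.logb 2 (S.weight i) ≤ Real.logb 2 (2 ^ J) :=
          Real.logb_le_logb_of_le one_lt_two (one_pos.trans_le (S.one_le i)) hweight
      _ = J := by rw [Real.logb_pow, Real.logb_self_eq_one one_lt_two, mul_one]
  linarith [S.rowSq_le i]

/-- Telescoping the approximants `v j ∈ V j` from `v 0 = a` down to `v J = 0` splits `a` into `J`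
pieces, each of which is covered at its own scale. -/
lemma memEllipsoid_of_near (S : State ι η J l) {a : ι → ℝ} (hJ : 0 < J)
    (ha : weightedSq S.weight a ≤ 2 ^ J)
    (hnear : ∀ j < J, Near S.weight (S.V j) (2 ^ j) a) :
    MemEllipsoid (colMatrix S.cols) ((3 * J) ^ 2) a := by
  have happrox (j : ℕ) (hj : j ≤ J) : ∃ v ∈ S.V j, weightedSq S.weight (a - v) ≤ 2 ^ j ∧
      (j = 0 → v = a) ∧ (j = J → v = 0) := by
    obtain rfl | hj₀ := eq_or_ne j 0
    · exact ⟨a, S.V_zero ▸ Submodule.mem_top, by simp [weightedSq], fun _ => rfl,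
        fun h => absurd h hJ.ne⟩
    obtain rfl | hjJ := hj.eq_or_lt
    · exact ⟨0, zero_mem _, by simpa using ha, fun h => absurd h hj₀, fun _ => rfl⟩
    · obtain ⟨v, hv, hle⟩ := hnear j hjJ
      exact ⟨v, hv, hle, fun h => absurd h hj₀, fun h => absurd h hjJ.ne⟩
  choose! v hv hle hv₀ hvJ using happrox
  have hpiece (j : ℕ) (hj : j < J) : MemEllipsoid (colMatrix S.cols) 6 (v j - v (j + 1)) := by
    refine (S.covers j _ ((S.V j).sub_mem (hv j hj.le)
      (S.antitone j.le_succ (hv (j + 1) hj)))).mono ?_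
    rw [div_le_iff₀ (by positivity), ← sub_sub_sub_cancel_left (v (j + 1)) (v j) a]
    refine (weightedSq_sub_le (zero_le_one.trans S.one_le) _ _).trans ?_
    linarith [hle j hj.le, hle (j + 1) hj, pow_succ (2 : ℝ) j]
  have hsum := MemEllipsoid.sum hpiece
  rw [Finset.sum_range_sub', hv₀ 0 J.zero_le rfl, hvJ J le_rfl rfl, sub_zero] at hsum
  exact hsum.mono (by nlinarith [sq_nonneg (J : ℝ)])

end State

lemma exists_run {α : Type*} {σ : List α → Type*} (hσ : Nonempty (σ []))
    {R : ∀ l a, σ l → σ (l ++ [a]) → Prop} (step : ∀ l a S, ∃ S', R l a S S') :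
    ∃ run : ∀ l, σ l, ∀ l a, R l a (run l) (run (l ++ [a])) := by
  obtain ⟨S₀⟩ := hσ
  choose next hnext using step
  refine ⟨List.reverseRec S₀ next, fun l a => ?_⟩
  simpa only [List.reverseRec_concat] using hnext l a (List.reverseRec S₀ next l)

/-- `D` is an online algorithm that assigns to each sequence its list of columns: columns are only
appended and, as long as the sequence satisfies `P`, the last vector is a combination of the columns
with coefficient vector in the unit ball. -/
def IsOnline (P : List (ι → ℝ) → Prop) (D : List (ι → ℝ) → List (ι → ℝ)) : Prop :=
  ∀ l a, D l <+: D (l ++ [a]) ∧ (P (l ++ [a]) → MemEllipsoid (colMatrix (D (l ++ [a]))) 1 a)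

theorem exists_isOnline_feasible [Fintype ι] {J : ℕ} (hJ : 0 < J)
    (hcard : 2 * Fintype.card ι ≤ 2 ^ J) :
    ∃ C : List (ι → ℝ) → List (ι → ℝ), IsOnline Feasible C ∧
      ∀ l, Feasible l → ∀ i, rowSq (colMatrix (C l)) i ≤ 45 * (J : ℝ) ^ 4 := by
  have hJ₁ : (1 : ℝ) ≤ J := Nat.one_le_cast.2 hJ
  have hη : (0 : ℝ) < 1 / (4 * J) := by positivity
  obtain ⟨run, hrun⟩ := exists_run (State.nonempty_nil ι _ J) fun l a S => S.exists_append hη a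
  have hweight (l : List (ι → ℝ)) (hl : Feasible l) : ∑ i, (run l).weight i ≤ 2 ^ J :=
    ((run l).sum_weight_le_two_mul_card hl hη.le (le_of_eq (by field_simp))).trans
      (by exact_mod_cast hcard)
  have hc : (0 : ℝ) < 3 * J := by positivity
  refine ⟨fun l => (run l).cols.map ((3 * J : ℝ) • ·),
    fun l a => ⟨(hrun l a).1.map _, fun hl => ?_⟩, fun l hl i => ?_⟩
  · have ha : weightedSq (run (l ++ [a])).weight a ≤ 2 ^ J :=
      (Finset.sum_le_sum fun i _ => mul_le_of_le_one_right
        (zero_le_one.trans ((run (l ++ [a])).one_le i))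
        (hl.sq_apply_le_one (by simp) i)).trans (hweight _ hl)
    rw [colMatrix_map_smul]
    exact ((State.memEllipsoid_of_near _ hJ ha (hrun l a).2).rescale hc).submatrix_equiv _
  · have hrow := (run l).mul_rowSq_le_of_sum_weight_le (hweight l hl) i
    rw [div_mul_eq_mul_div, one_mul, div_le_iff₀ (by positivity)] at hrow
    have hrow' : rowSq (colMatrix (run l).cols) i ≤ 5 * (J : ℝ) ^ 2 := by
      refine hrow.trans ?_
      field_simp
      nlinarith
    rw [rowSq_colMatrix_map_smul]
    calc (3 * J : ℝ) ^ 2 * rowSq (colMatrix (run l).cols) i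
        ≤ (3 * J : ℝ) ^ 2 * (5 * (J : ℝ) ^ 2) := by gcongr
      _ = 45 * (J : ℝ) ^ 4 := by ring

end Feasible

section Gamma2

variable [Fintype ι] [Fintype κ] [Fintype κ']

lemma rowNorm2inf_nonneg (M : Matrix ι κ ℝ) : 0 ≤ rowNorm2inf M :=
  Real.iSup_nonneg fun _ => Real.sqrt_nonneg _

lemma colNorm12_nonneg (M : Matrix ι κ ℝ) : 0 ≤ colNorm12 M :=
  Real.iSup_nonneg fun _ => Real.sqrt_nonneg _

lemma rowSq_le_sq_rowNorm2inf (M : Matrix ι κ ℝ) (i : ι) : rowSq M i ≤ rowNorm2inf M ^ 2 :=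
  (Real.sqrt_le_left (rowNorm2inf_nonneg M)).1 <|
    le_ciSup (f := fun i => √(∑ j, M i j ^ 2)) (Set.finite_range _).bddAbove i

lemma sum_sq_col_le_sq_colNorm12 (M : Matrix ι κ ℝ) (j : κ) :
    ∑ i, M i j ^ 2 ≤ colNorm12 M ^ 2 :=
  (Real.sqrt_le_left (colNorm12_nonneg M)).1 <|
    le_ciSup (f := fun j => √(∑ i, M i j ^ 2)) (Set.finite_range _).bddAbove j

lemma colNorm12_submatrix_le (M : Matrix ι κ ℝ) (f : κ' → κ) :
    colNorm12 (M.submatrix id f) ≤ colNorm12 M :=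
  Real.iSup_le (fun j =>
    Real.sqrt_le_iff.2 ⟨colNorm12_nonneg M, sum_sq_col_le_sq_colNorm12 M (f j)⟩)
    (colNorm12_nonneg M)

lemma gamma2_nonneg (A : Matrix ι κ ℝ) : 0 ≤ gamma2 A := by
  refine Real.sInf_nonneg ?_
  rintro _ ⟨k, L, R, -, rfl⟩
  exact mul_nonneg (rowNorm2inf_nonneg L) (colNorm12_nonneg R)

lemma gamma2_mul_le {k : ℕ} (L : Matrix ι (Fin k) ℝ) (R : Matrix (Fin k) κ ℝ) :
    gamma2 (L * R) ≤ rowNorm2inf L * colNorm12 R := by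
  refine csInf_le ⟨0, ?_⟩ ⟨k, L, R, rfl, rfl⟩
  rintro _ ⟨k, L, R, -, rfl⟩
  exact mul_nonneg (rowNorm2inf_nonneg L) (colNorm12_nonneg R)

lemma exists_eq_mul_of_gamma2_lt {A : Matrix ι κ ℝ} {g : ℝ} (h : gamma2 A < g) :
    ∃ (k : ℕ) (L : Matrix ι (Fin k) ℝ) (R : Matrix (Fin k) κ ℝ),
      L * R = A ∧ rowNorm2inf L * colNorm12 R < g := by
  classical
  have hne : ({c | ∃ (k : ℕ) (L : Matrix ι (Fin k) ℝ) (R : Matrix (Fin k) κ ℝ),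
      L * R = A ∧ c = rowNorm2inf L * colNorm12 R} : Set ℝ).Nonempty :=
    ⟨_, _, (1 : Matrix ι ι ℝ).submatrix id (Fintype.equivFin ι).symm,
      A.submatrix (Fintype.equivFin ι).symm id, by simp, rfl⟩
  obtain ⟨_, ⟨k, L, R, hLR, rfl⟩, hlt⟩ := exists_lt_of_csInf_lt hne h
  exact ⟨k, L, R, hLR, hlt⟩

lemma gamma2_submatrix_le (A : Matrix ι κ ℝ) (f : κ' → κ) :
    gamma2 (A.submatrix id f) ≤ gamma2 A := by
  refine le_of_forall_gt fun g hg => ?_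
  obtain ⟨k, L, R, rfl, hlt⟩ := exists_eq_mul_of_gamma2_lt hg
  calc gamma2 ((L * R).submatrix id f) = gamma2 (L * R.submatrix id f) := by
        rw [submatrix_mul _ _ id id f Function.bijective_id, submatrix_id_id]
    _ ≤ rowNorm2inf L * colNorm12 (R.submatrix id f) := gamma2_mul_le _ _
    _ ≤ rowNorm2inf L * colNorm12 R :=
        mul_le_mul_of_nonneg_left (colNorm12_submatrix_le R f) (rowNorm2inf_nonneg L)
    _ < g := hlt

lemma exists_memEllipsoid_of_gamma2_lt {A : Matrix ι κ ℝ} {g : ℝ} (h : gamma2 A < g) :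
    ∃ (n : ℕ) (M : Matrix ι (Fin n) ℝ),
      (∀ i, rowSq M i ≤ g ^ 2) ∧ ∀ j, MemEllipsoid M 1 (Aᵀ j) := by
  obtain ⟨k, L, R, rfl, hlt⟩ := exists_eq_mul_of_gamma2_lt h
  -- `colNorm12 R` may vanish; any slightly larger scaling still fits under `g`.
  have hcont : Filter.Tendsto (rowNorm2inf L * ·) (nhdsWithin (colNorm12 R) (Set.Ioi (colNorm12 R)))
      (nhds (rowNorm2inf L * colNorm12 R)) :=
    (continuous_const_mul _).continuousWithinAt
  obtain ⟨c, hcg, hc⟩ := ((hcont.eventually_lt_const hlt).and self_mem_nhdsWithin).exists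
  have hc₀ : 0 < c := (colNorm12_nonneg R).trans_lt hc
  refine ⟨k, c • L, fun i => ?_, fun j => MemEllipsoid.rescale hc₀ ⟨Rᵀ j, ?_, rfl⟩⟩
  · calc rowSq (c • L) i = c ^ 2 * rowSq L i := rowSq_smul c L i
      _ ≤ c ^ 2 * rowNorm2inf L ^ 2 := by gcongr; exact rowSq_le_sq_rowNorm2inf L i
      _ = (rowNorm2inf L * c) ^ 2 := by ring
      _ ≤ g ^ 2 := pow_le_pow_left₀ (mul_nonneg (rowNorm2inf_nonneg L) hc₀.le) hcg.le 2
  · exact (sum_sq_col_le_sq_colNorm12 R j).trans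
      (pow_le_pow_left₀ (colNorm12_nonneg R) hc.le 2)

lemma abs_apply_le_gamma2 (A : Matrix ι κ ℝ) (i : ι) (j : κ) : |A i j| ≤ gamma2 A := by
  refine le_of_forall_gt_imp_ge_of_dense fun g hg => ?_
  obtain ⟨n, M, hrow, hM⟩ := exists_memEllipsoid_of_gamma2_lt hg
  refine abs_le_of_sq_le_sq ?_ ((gamma2_nonneg A).trans hg.le)
  exact ((hM j).sq_apply_le i).trans ((mul_one _).trans_le (hrow i))

lemma gamma2_colMatrix_le_of_prefix {l l' : List (ι → ℝ)} (h : l <+: l') :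
    gamma2 (colMatrix l) ≤ gamma2 (colMatrix l') := by
  have hsub : colMatrix l = (colMatrix l').submatrix id (Fin.castLE h.length_le) := by
    ext i j
    exact congrFun (h.getElem j.2) i
  exact hsub ▸ gamma2_submatrix_le _ _

lemma gamma2_colMatrix_nil : gamma2 (colMatrix ([] : List (ι → ℝ))) = 0 := by
  have hmul : colMatrix [] =
      (0 : Matrix ι (Fin 0) ℝ) * (0 : Matrix (Fin 0) (Fin ([] : List (ι → ℝ)).length) ℝ) :=
    Matrix.ext fun _ j => j.elim0
  refine le_antisymm ?_ (gamma2_nonneg _)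
  calc gamma2 (colMatrix []) ≤ _ := hmul ▸ gamma2_mul_le _ _
    _ = 0 := by simp [colNorm12]

/-- The factor `2` leaves room because the infimum defining `gamma2` need not be attained. -/
lemma feasible_map_inv_smul {l : List (ι → ℝ)} {g : ℝ} (h : gamma2 (colMatrix l) ≤ g) :
    Feasible (l.map ((2 * g)⁻¹ • ·)) := by
  obtain rfl | hg := ((gamma2_nonneg _).trans h).eq_or_lt
  · refine ⟨0, 0, fun i => by simp [rowSq], fun b hb => ?_⟩
    obtain ⟨a, -, rfl⟩ := List.mem_map.1 hb
    simpa using (MemEllipsoid.zero (0 : Matrix ι (Fin 0) ℝ)).mono zero_le_one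
  · obtain ⟨n, M, hrow, hM⟩ := exists_memEllipsoid_of_gamma2_lt (g := 2 * g) (by linarith)
    refine ⟨n, (2 * g)⁻¹ • M, fun i => ?_, fun b hb => ?_⟩
    · rw [rowSq_smul, inv_pow, inv_mul_le_iff₀ (by positivity), mul_one]
      exact hrow i
    · obtain ⟨a, ha, rfl⟩ := List.mem_map.1 hb
      obtain ⟨j, rfl⟩ := List.get_of_mem ha
      exact (hM j).smul _

lemma smul_inv_smul_of_gamma2_le {l : List (ι → ℝ)} {g : ℝ} (h : gamma2 (colMatrix l) ≤ g)
    {a : ι → ℝ} (ha : a ∈ l) : (2 * g) • (2 * g)⁻¹ • a = a := by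
  obtain rfl | hg := ((gamma2_nonneg _).trans h).eq_or_lt
  · obtain ⟨j, rfl⟩ := List.get_of_mem ha
    have hzero : l.get j = 0 := funext fun i =>
      abs_nonpos_iff.1 ((abs_apply_le_gamma2 (colMatrix l) i j).trans h)
    simp only [hzero, smul_zero]
  · exact smul_inv_smul₀ (by positivity) a

end Gamma2

section Doubling

variable [Fintype ι] {C : List (ι → ℝ) → List (ι → ℝ)} {B : ℝ} {l : List (ι → ℝ)}

/-- The state of the doubling algorithm after the vectors `l` have arrived: the current guess of
`γ₂`, the columns produced in phases that used smaller guesses, and the suitably scaled vectors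
that arrived in the current phase. -/
structure Phase (B : ℝ) (l : List (ι → ℝ)) where
  done : List (ι → ℝ)
  guess : ℝ
  seg : List (ι → ℝ)
  gamma2_le : gamma2 (colMatrix l) ≤ guess
  guess_le : guess ≤ 2 * gamma2 (colMatrix l)
  seg_subset : seg ⊆ l.map ((2 * guess)⁻¹ • ·)
  rowSq_done_le i : 3 * rowSq (colMatrix done) i ≤ B * (2 * guess) ^ 2

namespace Phase

/-- The columns produced so far when the algorithm `C` is run, rescaled, in every phase. -/
def cols (C : List (ι → ℝ) → List (ι → ℝ)) (P : Phase B l) : List (ι → ℝ) :=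
  P.done ++ (C P.seg).map ((2 * P.guess) • ·)

lemma feasible_seg (P : Phase B l) : Feasible P.seg :=
  (feasible_map_inv_smul P.gamma2_le).mono P.seg_subset

lemma rowSq_cols_le (hC : ∀ l, Feasible l → ∀ i, rowSq (colMatrix (C l)) i ≤ B) (P : Phase B l)
    (i : ι) : 3 * rowSq (colMatrix (P.cols C)) i ≤ 4 * B * (2 * P.guess) ^ 2 := by
  rw [cols, rowSq_colMatrix_append, rowSq_colMatrix_map_smul]
  have hseg := mul_le_mul_of_nonneg_left (hC _ P.feasible_seg i) (sq_nonneg (2 * P.guess))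
  linarith [P.rowSq_done_le i]

lemma memEllipsoid_cols (hC : IsOnline Feasible C) (P : Phase B l) {a : ι → ℝ} (ha : a ∈ l)
    {l' : List (ι → ℝ)} (hseg : P.seg = l' ++ [(2 * P.guess)⁻¹ • a]) :
    MemEllipsoid (colMatrix (P.cols C)) 1 a := by
  have hmem := (hC l' ((2 * P.guess)⁻¹ • a)).2 (hseg ▸ P.feasible_seg)
  rw [← hseg] at hmem
  have hsmul := hmem.smul (2 * P.guess)
  rw [smul_inv_smul_of_gamma2_le P.gamma2_le ha] at hsmul
  refine MemEllipsoid.append_left ?_ P.done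
  rw [colMatrix_map_smul]
  exact hsmul.submatrix_equiv _

lemma exists_append (hB : 0 ≤ B) (hC : IsOnline Feasible C)
    (hrow : ∀ l, Feasible l → ∀ i, rowSq (colMatrix (C l)) i ≤ B) (P : Phase B l) (a : ι → ℝ) :
    ∃ P' : Phase B (l ++ [a]), P.cols C <+: P'.cols C ∧
      MemEllipsoid (colMatrix (P'.cols C)) 1 a := by
  have hmono := gamma2_colMatrix_le_of_prefix (List.prefix_append l [a])
  by_cases hle : gamma2 (colMatrix (l ++ [a])) ≤ P.guess
  · let P' : Phase B (l ++ [a]) :=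
      { done := P.done
        guess := P.guess
        seg := P.seg ++ [(2 * P.guess)⁻¹ • a]
        gamma2_le := hle
        guess_le := P.guess_le.trans (by gcongr)
        seg_subset := by
          rw [List.map_append]
          exact List.append_subset.2
            ⟨List.subset_append_of_subset_left _ P.seg_subset, List.subset_append_right _ _⟩
        rowSq_done_le := P.rowSq_done_le }
    exact ⟨P', List.prefix_append_right_inj _ |>.2 ((hC _ _).1.map _),
      P'.memEllipsoid_cols hC (by simp) rfl⟩
  · have hguess : 2 * P.guess ≤ 2 * gamma2 (colMatrix (l ++ [a])) := by linarith
    let P' : Phase B (l ++ [a]) :=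
      { done := P.cols C
        guess := 2 * gamma2 (colMatrix (l ++ [a]))
        seg := [] ++ [(2 * (2 * gamma2 (colMatrix (l ++ [a]))))⁻¹ • a]
        gamma2_le := le_mul_of_one_le_left (gamma2_nonneg _) one_le_two
        guess_le := le_rfl
        seg_subset := by simp
        rowSq_done_le i :=
          calc 3 * rowSq (colMatrix (P.cols C)) i ≤ 4 * B * (2 * P.guess) ^ 2 :=
                P.rowSq_cols_le hrow i
            _ ≤ 4 * B * (2 * gamma2 (colMatrix (l ++ [a]))) ^ 2 := by
                have := (gamma2_nonneg _).trans P.gamma2_le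
                gcongr
            _ = B * (2 * (2 * gamma2 (colMatrix (l ++ [a])))) ^ 2 := by ring }
    exact ⟨P', List.prefix_append _ _, P'.memEllipsoid_cols hC (by simp) rfl⟩

end Phase

theorem exists_isOnline_of_feasible (hB : 0 ≤ B) (hC : IsOnline Feasible C)
    (hrow : ∀ l, Feasible l → ∀ i, rowSq (colMatrix (C l)) i ≤ B) :
    ∃ D : List (ι → ℝ) → List (ι → ℝ), IsOnline (fun _ => True) D ∧
      ∀ l i, 3 * rowSq (colMatrix (D l)) i ≤ 64 * B * gamma2 (colMatrix l) ^ 2 := by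
  let P₀ : Phase B ([] : List (ι → ℝ)) :=
    { done := []
      guess := 0
      seg := []
      gamma2_le := gamma2_colMatrix_nil.le
      guess_le := by rw [gamma2_colMatrix_nil, mul_zero]
      seg_subset := List.nil_subset _
      rowSq_done_le := by simp [rowSq] }
  obtain ⟨run, hrun⟩ := exists_run ⟨P₀⟩ fun l a P => P.exists_append hB hC hrow a
  refine ⟨fun l => (run l).cols C, fun l a => ⟨(hrun l a).1, fun _ => (hrun l a).2⟩, fun l i => ?_⟩
  have hguess := (gamma2_nonneg _).trans (run l).gamma2_le
  calc 3 * rowSq (colMatrix ((run l).cols C)) i ≤ 4 * B * (2 * (run l).guess) ^ 2 :=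
        (run l).rowSq_cols_le hrow i
    _ ≤ 4 * B * (2 * (2 * gamma2 (colMatrix l))) ^ 2 := by gcongr; exact (run l).guess_le
    _ = 64 * B * gamma2 (colMatrix l) ^ 2 := by ring

lemma clog_add_one_le_two_mul_logb {n : ℕ} (hn : 0 < n) :
    ((Nat.clog 2 n + 1 : ℕ) : ℝ) ≤ 2 * Real.logb 2 (2 * n) := by
  have hn₁ : (1 : ℝ) ≤ n := Nat.one_le_cast.2 hn
  have hlog : Real.logb 2 (2 * n) = 1 + Real.logb 2 n := by
    rw [Real.logb_mul two_ne_zero (by positivity), Real.logb_self_eq_one one_lt_two]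
  have hlog₀ : 0 ≤ Real.logb 2 n := Real.logb_nonneg one_lt_two hn₁
  have hceil := Nat.ceil_lt_add_one hlog₀
  rw [show (2 : ℝ) = (2 : ℕ) by norm_num, Real.natCeil_logb_natCast] at hceil
  push_cast at hceil ⊢
  linarith

theorem exists_isOnline (ι : Type*) [Fintype ι] :
    ∃ D : List (ι → ℝ) → List (ι → ℝ), IsOnline (fun _ => True) D ∧
      ∀ l i, √(rowSq (colMatrix (D l)) i) ≤
        124 * gamma2 (colMatrix l) * Real.logb 2 (2 * Fintype.card ι) ^ 2 := by
  set J := Nat.clog 2 (Fintype.card ι) + 1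
  have hcard : 2 * Fintype.card ι ≤ 2 ^ J := by
    rw [pow_succ']
    exact Nat.mul_le_mul_left 2 (Nat.le_pow_clog one_lt_two _)
  obtain ⟨C, hC, hrow⟩ := exists_isOnline_feasible (Nat.succ_pos _) hcard
  obtain ⟨D, hD, hDrow⟩ := exists_isOnline_of_feasible (by positivity) hC hrow
  refine ⟨D, hD, fun l i => ?_⟩
  have hJ : (J : ℝ) ≤ 2 * Real.logb 2 (2 * Fintype.card ι) :=
    clog_add_one_le_two_mul_logb (Fintype.card_pos_iff.2 ⟨i⟩)
  have hγ := gamma2_nonneg (colMatrix l)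
  calc √(rowSq (colMatrix (D l)) i) ≤ 31 * gamma2 (colMatrix l) * (J : ℝ) ^ 2 := by
        refine Real.sqrt_le_iff.2 ⟨by positivity, ?_⟩
        nlinarith [hDrow l i, sq_nonneg (gamma2 (colMatrix l) * (J : ℝ) ^ 2)]
    _ ≤ 31 * gamma2 (colMatrix l) * (2 * Real.logb 2 (2 * Fintype.card ι)) ^ 2 := by gcongr
    _ = 124 * gamma2 (colMatrix l) * Real.logb 2 (2 * Fintype.card ι) ^ 2 := by ring

end Doubling

lemma sum_range_getD (L : List (ι → ℝ)) (f : ℕ → (ι → ℝ) → ℝ) :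
    ∑ j ∈ Finset.range L.length, f j (L.getD j 0) = ∑ j : Fin L.length, f j L[j] := by
  rw [← Fin.sum_univ_eq_sum_range fun j => f j (L.getD j 0)]
  simp

lemma MemEllipsoid.exists_coeff {L : List (ι → ℝ)} {θ : ℝ} {a : ι → ℝ}
    (h : MemEllipsoid (colMatrix L) θ a) :
    ∃ r : ℕ → ℝ, ∑ j ∈ Finset.range L.length, r j ^ 2 ≤ θ ∧
      ∀ i, ∑ j ∈ Finset.range L.length, L.getD j 0 i * r j = a i := by
  obtain ⟨y, hy, rfl⟩ := h
  set r : ℕ → ℝ := Function.extend Fin.val y 0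
  have hr (j : Fin L.length) : r j = y j := Fin.val_injective.extend_apply y 0 j
  refine ⟨r, ?_, fun i => ?_⟩
  · rw [sum_range_getD L fun j _ => r j ^ 2]
    simpa only [hr] using hy
  · rw [sum_range_getD L fun j v => v i * r j]
    simp only [hr]
    rfl

lemma IsOnline.exists_coeff {D : List (ι → ℝ) → List (ι → ℝ)} (hD : IsOnline (fun _ => True) D) :
    ∃ r : List (ι → ℝ) → ℕ → ℝ,
      (∀ l, ∑ j ∈ Finset.range (D l).length, r l j ^ 2 ≤ 1) ∧
      ∀ l a i, ∑ j ∈ Finset.range (D (l ++ [a])).length,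
        (D (l ++ [a])).getD j 0 i * r (l ++ [a]) j = a i := by
  have hcoeff (l : List (ι → ℝ)) : ∃ r : ℕ → ℝ,
      ∑ j ∈ Finset.range (D l).length, r j ^ 2 ≤ 1 ∧ ∀ a ∈ l.getLast?, ∀ i,
        ∑ j ∈ Finset.range (D l).length, (D l).getD j 0 i * r j = a i := by
    obtain rfl | ⟨l, a, rfl⟩ := l.eq_nil_or_concat'
    · exact ⟨0, by simp, by simp⟩
    · simpa using ((hD l a).2 trivial).exists_coeff
  choose r hr hsum using hcoeff
  exact ⟨r, hr, fun l a => hsum (l ++ [a]) a (by simp)⟩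

lemma one_le_logb_two_mul {n : ℕ} (hn : 0 < n) : 1 ≤ Real.logb 2 (2 * n) := by
  rw [Real.le_logb_iff_rpow_le one_lt_two (by positivity), Real.rpow_one]
  exact le_mul_of_one_le_right two_pos.le (Nat.one_le_cast.2 hn)

end OnlineFactorization

theorem stmt8_general :
    ∃ K : ℝ, 0 < K ∧ ∀ (ι : Type*) [Fintype ι],
    ∃ (k : List (ι → ℝ) → ℕ) (col : List (ι → ℝ) → ℕ → (ι → ℝ)) (r : List (ι → ℝ) → ℕ → ℝ),
      (∀ l a, k l ≤ k (l ++ [a]) ∧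
        (∀ i < k l, col (l ++ [a]) i = col l i) ∧
        (∀ x : ι, ∑ i ∈ Finset.range (k (l ++ [a])),
          col (l ++ [a]) i x * r (l ++ [a]) i = a x)) ∧
      (∀ (N : ℕ) (A : Matrix ι (Fin N) ℝ),
        (∀ (t : ℕ) (ht : t ≤ N), 1 ≤ t →
          ∀ pl : List (ι → ℝ), pl = List.ofFn (fun s : Fin t => fun x => A x (Fin.castLE ht s)) →
            √(∑ i ∈ Finset.range (k pl), (r pl i) ^ 2) ≤ 1) ∧
        (∀ pl : List (ι → ℝ), pl = List.ofFn (fun s : Fin N => fun x => A x s) →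
          ∀ x : ι, √(∑ i ∈ Finset.range (k pl), (col pl i x) ^ 2) ≤
            K * gamma2 A * (Real.logb 2 (2 * Fintype.card ι)) ^ 2)) := by
  refine ⟨124, by norm_num, fun ι _ => ?_⟩
  obtain ⟨D, hD, hrow⟩ := OnlineFactorization.exists_isOnline ι
  obtain ⟨r, hr, hsum⟩ := hD.exists_coeff
  refine ⟨fun l => (D l).length, fun l i => (D l).getD i 0, r, fun l a => ⟨?_, fun i hi => ?_, ?_⟩,
    fun N A => ⟨fun t ht _ pl _ => Real.sqrt_le_one.2 (hr pl), ?_⟩⟩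
  · exact (hD l a).1.length_le
  · obtain ⟨W, hW⟩ := (hD l a).1
    simp only [← hW, List.getD_append _ _ _ _ hi]
  · exact hsum l a
  · rintro _ rfl x
    rw [OnlineFactorization.sum_range_getD _ fun _ v => v x ^ 2]
    have hA : OnlineFactorization.colMatrix (List.ofFn Aᵀ) =
        A.submatrix id (finCongr List.length_ofFn) := OnlineFactorization.colMatrix_ofFn _
    refine (hrow _ x).trans ?_
    gcongr
    exact hA ▸ OnlineFactorization.gamma2_submatrix_le A _

/-- An online factorization algorithm in the column arrival model is encoded by functions
of the sequence of columns received so far: `k l` is the number of columns of the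
current matrix `L`, `col l i` is its `i`-th column, and `r l` is the current column
vector (one coordinate per column of `L`). -/
theorem stmt8 :
    ∃ K : ℝ, 0 < K ∧ ∀ m : ℕ,
    ∃ (k : List (Fin m → ℝ) → ℕ) (col : List (Fin m → ℝ) → ℕ → (Fin m → ℝ))
      (r : List (Fin m → ℝ) → ℕ → ℝ),
      -- online structure: `L_t` extends `L_{t-1}` by appending columns, and `L_t r_t = a_t`
      (∀ l a, k l ≤ k (l ++ [a]) ∧
        (∀ i < k l, col (l ++ [a]) i = col l i) ∧
        (∀ x : Fin m,
          ∑ i ∈ Finset.range (k (l ++ [a])), col (l ++ [a]) i x * r (l ++ [a]) i = a x)) ∧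
      -- the guarantee, when the algorithm is run on the columns of `A`
      (∀ (N : ℕ) (A : Matrix (Fin m) (Fin N) ℝ),
        -- `‖r_t‖₂ ≤ 1` for every `t ∈ {1,…,N}`
        (∀ (t : ℕ) (ht : t ≤ N), 1 ≤ t →
          ∀ pl : List (Fin m → ℝ),
            pl = List.ofFn (fun s : Fin t => fun x => A x (Fin.castLE ht s)) →
            Real.sqrt (∑ i ∈ Finset.range (k pl), (r pl i) ^ 2) ≤ 1) ∧
        -- `‖L_N‖_{2→∞} ≤ K·γ₂(A)·(log₂ 2m)³`
        (∀ pl : List (Fin m → ℝ), pl = List.ofFn (fun s : Fin N => fun x => A x s) →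
          ∀ x : Fin m,
            Real.sqrt (∑ i ∈ Finset.range (k pl), (col pl i x) ^ 2) ≤
              K * gamma2 A * (Real.logb 2 (2 * m)) ^ 3)) := by
  obtain ⟨K, hK, h⟩ := stmt8_general
  refine ⟨K, hK, fun m => ?_⟩
  obtain ⟨k, col, r, honline, hbound⟩ := h (Fin m)
  refine ⟨k, col, r, honline, fun N A => ⟨(hbound N A).1, fun pl hpl x => ?_⟩⟩
  have hlog := OnlineFactorization.one_le_logb_two_mul x.pos
  have hγ := OnlineFactorization.gamma2_nonneg A
  calc _ ≤ K * gamma2 A * Real.logb 2 (2 * m) ^ 2 := by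
        simpa only [Fintype.card_fin] using (hbound N A).2 pl hpl x
    _ ≤ K * gamma2 A * Real.logb 2 (2 * m) ^ 3 := by gcongr; norm_num
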